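/- arXiv:2003.13178 — 9 statements merged into one kernel-verified Lean document; each statement's English description precedes it below -/
import Mathlib

section
/- Let α ∈ (0,1) and β, γ ∈ (0,1) with β + γ = 1, and define δ = (2γ + αβ − αγ − √(α(4βγ + αβ² + αγ² − 2αβγ)))/(2γ). Then 0 < δ < 1 − α. -/
/-- For `α ∈ (0,1)` and `β, γ ∈ (0,1)` with `β + γ = 1`, the tangency point
`δ = (2γ + αβ − αγ − √(α(4βγ + αβ² + αγ² − 2αβγ))) / (2γ)` satisfies
`0 < δ < 1 − α`. -/
theorem tangency_point_in_interval
    (α β γ : ℝ) (hα : α ∈ Set.Ioo (0 : ℝ) 1)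
    (hβ : β ∈ Set.Ioo (0 : ℝ) 1) (hγ : γ ∈ Set.Ioo (0 : ℝ) 1)
    (hβγ : β + γ = 1) :
    0 < (2 * γ + α * β - α * γ -
          Real.sqrt (α * (4 * β * γ + α * β ^ 2 + α * γ ^ 2 - 2 * α * β * γ))) /
        (2 * γ) ∧
    (2 * γ + α * β - α * γ -
          Real.sqrt (α * (4 * β * γ + α * β ^ 2 + α * γ ^ 2 - 2 * α * β * γ))) /
        (2 * γ) < 1 - α := by
  obtain ⟨ha, ha1⟩ := hα
  obtain ⟨hb, hb1⟩ := hβ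
  obtain ⟨hc, hc1⟩ := hγ
  have h1a : 0 < 1 - α := by linarith
  constructor
  · apply div_pos _ (by positivity)
    rw [sub_pos, Real.sqrt_lt' (by nlinarith [mul_pos ha hb, mul_pos h1a hc])]
    have : 0 < 4 * γ ^ 2 * (1 - α) := by positivity
    linarith
  · rw [div_lt_iff₀ (by positivity)]
    have h : α * (β + γ) <
        Real.sqrt (α * (4 * β * γ + α * β ^ 2 + α * γ ^ 2 - 2 * α * β * γ)) := by
      apply Real.lt_sqrt_of_sq_lt
      have : 0 < 4 * α * β * γ * (1 - α) := by positivity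
      linarith
    linarith
end

section
/- Let α ∈ (0,1) and β, γ ∈ (0,1) with β + γ = 1, define δ = (2γ + αβ − αγ − √(α(4βγ + αβ² + αγ² − 2αβγ)))/(2γ), and define f(n) = (1 − α/(1−n))^β · n^γ. Then f has derivative 0 at δ, i.e., HasDerivAt f 0 δ. -/
/-- For `α ∈ (0,1)`, `β, γ ∈ (0,1)` with `β + γ = 1`, the function
`f(n) = (1 − α/(1−n))^β * n^γ` (real powers) has derivative `0` at the tangency
point `δ = (2γ + αβ − αγ − √(α(4βγ + αβ² + αγ² − 2αβγ))) / (2γ)`. -/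
theorem hasDerivAt_tangency
    (α β γ : ℝ) (hα : α ∈ Set.Ioo (0 : ℝ) 1)
    (hβ : β ∈ Set.Ioo (0 : ℝ) 1) (hγ : γ ∈ Set.Ioo (0 : ℝ) 1)
    (hβγ : β + γ = 1) :
    HasDerivAt (fun n : ℝ => (1 - α / (1 - n)) ^ β * n ^ γ) 0
      ((2 * γ + α * β - α * γ -
          Real.sqrt (α * (4 * β * γ + α * β ^ 2 + α * γ ^ 2 - 2 * α * β * γ))) /
        (2 * γ)) := by
  obtain ⟨a0, a1⟩ := hα
  obtain ⟨b0, b1⟩ := hβ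
  obtain ⟨c0, c1⟩ := hγ
  set s := Real.sqrt (α * (4 * β * γ + α * β ^ 2 + α * γ ^ 2 - 2 * α * β * γ)) with hs
  have hbc : 0 < β * γ := mul_pos b0 c0
  have hD : α * (4 * β * γ + α * β ^ 2 + α * γ ^ 2 - 2 * α * β * γ)
      = α ^ 2 + 4 * α * (β * γ) * (1 - α) := by
    have : β = 1 - γ := by linarith
    subst this; ring
  have hp : 0 < 4 * α * (β * γ) * (1 - α) := by
    have : 0 < 1 - α := by linarith
    positivity
  have hs0 : 0 ≤ s := Real.sqrt_nonneg _
  have hs2 : s ^ 2 = α ^ 2 + 4 * α * (β * γ) * (1 - α) := by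
    rw [hs, Real.sq_sqrt, hD]
    rw [hD]; positivity
  have hsα : α < s := by
    apply lt_of_pow_lt_pow_left₀ 2 hs0
    linarith
  have hu : 0 < 2 * γ + α * β - α * γ := by nlinarith [mul_pos a0 b0]
  have hsu : s < 2 * γ + α * β - α * γ := by
    apply lt_of_pow_lt_pow_left₀ 2 hu.le
    have h : 0 < 4 * γ ^ 2 * (1 - α) := by
      have : 0 < 1 - α := by linarith
      positivity
    have : (2 * γ + α * β - α * γ) ^ 2 - s ^ 2 = 4 * γ ^ 2 * (1 - α) := by
      rw [hs2]
      have : β = 1 - γ := by linarith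
      subst this; ring
    linarith
  set n := (2 * γ + α * β - α * γ - s) / (2 * γ) with hn
  have hn0 : 0 < n := div_pos (by linarith) (by linarith)
  have hsn : s = 2 * γ + α * β - α * γ - 2 * γ * n := by
    rw [hn]; field_simp; ring
  have hn1 : 0 < 1 - n - α := by
    have h : 0 < 2 * γ * (1 - n - α) := by
      have : β = 1 - γ := by linarith
      have h2 : α * β = α - α * γ := by rw [this]; ring
      linarith
    exact pos_of_mul_pos_right h (by linarith)
  have ht : 0 < 1 - n := by linarith
  have key : γ * (1 - n) * (1 - n - α) = α * β * n := by
    have h : 4 * γ * (γ * (1 - n) * (1 - n - α) - α * β * n) = 0 := by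
      rw [hsn] at hs2
      have : β = 1 - γ := by linarith
      rw [this] at hs2 ⊢
      linear_combination hs2
    have := (mul_eq_zero.mp h).resolve_left (by positivity)
    linarith
  have hg : 0 < 1 - α / (1 - n) := by
    have : 1 - α / (1 - n) = (1 - n - α) / (1 - n) := by field_simp
    rw [this]; exact div_pos hn1 ht
  have h1 : HasDerivAt (fun x : ℝ => 1 - α / (1 - x)) (-(α / (1 - n) ^ 2)) n := by
    have := (((hasDerivAt_const n α).div ((hasDerivAt_id n).const_sub 1) ht.ne').const_sub 1)
    refine this.congr_deriv ?_
    simp [neg_div]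
  have h2 := (h1.rpow_const (p := β) (Or.inl hg.ne')).mul
    ((hasDerivAt_id n).rpow_const (p := γ) (Or.inl hn0.ne'))
  refine h2.congr_deriv ?_
  simp only [id]
  rw [Real.rpow_sub_one hg.ne', Real.rpow_sub_one hn0.ne']
  have e : -(α / (1 - n) ^ 2) * β / (1 - α / (1 - n)) + γ / n = 0 := by
    have : 1 - α / (1 - n) = (1 - n - α) / (1 - n) := by field_simp
    rw [this]
    field_simp
    linear_combination key
  linear_combination ((1 - α / (1 - n)) ^ β * n ^ γ) * e
end

section
/- Let α ∈ (0,1) and β, γ ∈ (0,1) with β + γ = 1, define δ = (2γ + αβ − αγ − √(α(4βγ + αβ² + αγ² − 2αβγ)))/(2γ), and define f(n) = (1 − α/(1−n))^β · n^γ. Then for every n ∈ [0, 1−α], f(n) ≤ f(δ); that is, f attains its maximum over [0, 1−α] at δ. -/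
theorem aux_max (α β γ δ n : ℝ) (hα : 0 < α) (hβ : 0 < β) (hγ : 0 < γ) (hs : β + γ = 1)
    (hδ : 0 < δ) (hδ1 : δ < 1 - α) (hc : γ * ((1 - δ - α) * (1 - δ)) = α * β * δ)
    (hn : 0 ≤ n) (hn1 : n ≤ 1 - α) :
    (1 - α / (1 - n)) ^ β * n ^ γ ≤ (1 - α / (1 - δ)) ^ β * δ ^ γ := by
  have hv : 0 < 1 - δ := by linarith
  have hu : 0 < 1 - n := by linarith
  have hw : 0 < 1 - δ - α := by linarith
  have hGe : 1 - α / (1 - δ) = (1 - δ - α) / (1 - δ) := by field_simp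
  have hG : 0 < 1 - α / (1 - δ) := by rw [hGe]; positivity
  have hg : 0 ≤ 1 - α / (1 - n) := by
    have : α / (1 - n) ≤ 1 := by rw [div_le_one hu]; linarith
    linarith
  have hconc : 1 - α / (1 - n) ≤ 1 - α / (1 - δ) - α * (n - δ) / (1 - δ) ^ 2 := by
    have e : (1 - α / (1 - δ) - α * (n - δ) / (1 - δ) ^ 2) - (1 - α / (1 - n))
        = α * (n - δ) ^ 2 / ((1 - n) * (1 - δ) ^ 2) := by
      field_simp
      ring
    have : 0 ≤ α * (n - δ) ^ 2 / ((1 - n) * (1 - δ) ^ 2) := by positivity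
    linarith
  have h1 : β * ((1 - α / (1 - n)) / (1 - α / (1 - δ))) ≤ β - γ * (n - δ) / δ := by
    have e : β * ((1 - α / (1 - δ) - α * (n - δ) / (1 - δ) ^ 2) / (1 - α / (1 - δ)))
        = β - γ * (n - δ) / δ := by
      have hγe : γ = α * β * δ / ((1 - δ - α) * (1 - δ)) := by
        rw [eq_div_iff (by positivity)]; exact hc
      rw [hGe, hγe]
      field_simp
    rw [← e]
    gcongr
  have amgm := Real.geom_mean_le_arith_mean2_weighted hβ.le hγ.le
    (div_nonneg hg hG.le) (div_nonneg hn hδ.le) hs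
  rw [Real.div_rpow hg hG.le, Real.div_rpow hn hδ.le, div_mul_div_comm] at amgm
  have h2 : γ * (n / δ) = γ + γ * (n - δ) / δ := by field_simp; ring
  have hP : 0 < (1 - α / (1 - δ)) ^ β * δ ^ γ :=
    mul_pos (Real.rpow_pos_of_pos hG _) (Real.rpow_pos_of_pos hδ _)
  rw [← div_le_one hP]
  linarith

/-- For `α ∈ (0,1)`, `β, γ ∈ (0,1)` with `β + γ = 1`, the function
`f(n) = (1 − α/(1−n))^β * n^γ` (real powers) attains its maximum over `[0, 1−α]`
at the tangency point `δ = (2γ + αβ − αγ − √(α(4βγ + αβ² + αγ² − 2αβγ))) / (2γ)`: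
for every `n ∈ [0, 1−α]`, `f n ≤ f δ`. -/
theorem tangency_point_is_max
    (α β γ : ℝ) (hα : α ∈ Set.Ioo (0 : ℝ) 1)
    (hβ : β ∈ Set.Ioo (0 : ℝ) 1) (hγ : γ ∈ Set.Ioo (0 : ℝ) 1)
    (hβγ : β + γ = 1) :
    ∀ n ∈ Set.Icc (0 : ℝ) (1 - α),
      (1 - α / (1 - n)) ^ β * n ^ γ ≤
        (1 - α / (1 -
            (2 * γ + α * β - α * γ -
              Real.sqrt (α * (4 * β * γ + α * β ^ 2 + α * γ ^ 2 - 2 * α * β * γ))) /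
            (2 * γ))) ^ β *
          ((2 * γ + α * β - α * γ -
              Real.sqrt (α * (4 * β * γ + α * β ^ 2 + α * γ ^ 2 - 2 * α * β * γ))) /
            (2 * γ)) ^ γ := by
  intro n hn
  obtain ⟨a0, a1⟩ := hα
  obtain ⟨b0, b1⟩ := hβ
  obtain ⟨c0, c1⟩ := hγ
  have hD : 0 ≤ α * (4 * β * γ + α * β ^ 2 + α * γ ^ 2 - 2 * α * β * γ) := by
    have : α * (4 * β * γ + α * β ^ 2 + α * γ ^ 2 - 2 * α * β * γ)
      = 4 * α * β * γ + α ^ 2 * (β - γ) ^ 2 := by ring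
    rw [this]; positivity
  have hsq := Real.sq_sqrt hD
  have hs0 := Real.sqrt_nonneg (α * (4 * β * γ + α * β ^ 2 + α * γ ^ 2 - 2 * α * β * γ))
  generalize Real.sqrt (α * (4 * β * γ + α * β ^ 2 + α * γ ^ 2 - 2 * α * β * γ)) = s at *
  have hB : 0 < 2 * γ + α * β - α * γ := by nlinarith [mul_pos a0 b0]
  have hlt : s < 2 * γ + α * β - α * γ := by
    apply lt_of_pow_lt_pow_left₀ 2 hB.le
    have : 0 < γ ^ 2 * (1 - α) := mul_pos (by positivity) (by linarith)
    nlinarith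
  have hgt : α * (β + γ) < s := by
    apply lt_of_pow_lt_pow_left₀ 2 hs0
    have : 0 < α * β * γ * (1 - α) := mul_pos (by positivity) (by linarith)
    nlinarith
  refine aux_max α β γ _ n a0 b0 c0 hβγ (div_pos (by linarith) (by linarith)) ?_ ?_ hn.1 hn.2
  · rw [div_lt_iff₀ (by linarith)]
    linarith
  · field_simp
    linear_combination hsq
end

section
/- Let α ∈ (0,1) and β, γ ∈ (0,1) with β + γ = 1, and define δ = (2γ + αβ − αγ − √(α(4βγ + αβ² + αγ² − 2αβγ)))/(2γ). Then for all m, n ∈ [0,1) with (1 − m)·(1 − n) ≥ α, one has m^β · n^γ ≤ (1 − α/(1−δ))^β · δ^γ. -/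
theorem cut_aux (α β γ m n M N : ℝ) (hβ : 0 < β) (hγ : 0 < γ) (h1 : β + γ = 1)
    (hM : 0 < M) (hM1 : M < 1) (hN : 0 < N) (hN1 : N < 1)
    (hα : (1 - M) * (1 - N) = α) (hs : β * (1 - M) * N = γ * M * (1 - N))
    (hm : 0 ≤ m) (hm1 : m < 1) (hn : 0 ≤ n) (hn1 : n < 1)
    (h : (1 - m) * (1 - n) ≥ α) : m ^ β * n ^ γ ≤ M ^ β * N ^ γ := by
  have hA := Real.geom_mean_le_arith_mean2_weighted hβ.le hγ.le
    (div_nonneg hm hM.le) (div_nonneg hn hN.le) h1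
  have hu : 0 < 1 - M := by linarith
  have hv : 0 < 1 - N := by linarith
  have hp : 0 < 1 - m := by linarith
  have hq : 0 < 1 - n := by linarith
  -- tangent line
  have hT : 2 * ((1 - M) * (1 - N)) ≤ (1 - m) * (1 - N) + (1 - n) * (1 - M) := by
    have h2 : (2 * ((1 - M) * (1 - N))) ^ 2 ≤ ((1 - m) * (1 - N) + (1 - n) * (1 - M)) ^ 2 := by
      have h3 : (1 - M) * (1 - N) * ((1 - M) * (1 - N))
          ≤ (1 - M) * (1 - N) * ((1 - m) * (1 - n)) :=
        mul_le_mul_of_nonneg_left (by linarith) (by positivity)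
      nlinarith [sq_nonneg ((1 - m) * (1 - N) - (1 - n) * (1 - M))]
    exact le_of_sq_le_sq h2 (by positivity)
  have hB : β * (m / M) + γ * (n / N) ≤ 1 := by
    have hg : γ / N = β * (1 - M) / (M * (1 - N)) := by
      rw [div_eq_div_iff hN.ne' (by positivity)]; linarith
    have e : 1 - (β * (m / M) + γ * (n / N)) =
        β / (M * (1 - N)) * ((1 - m) * (1 - N) + (1 - n) * (1 - M) - 2 * ((1 - M) * (1 - N))) := by
      have e1 : 1 - (β * (m / M) + γ * (n / N)) = β / M * (M - m) + γ / N * (N - n) := by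
        field_simp; linear_combination (-(M * N)) * h1
      rw [e1, hg]; field_simp; ring
    have : 0 ≤ 1 - (β * (m / M) + γ * (n / N)) := by
      rw [e]; exact mul_nonneg (by positivity) (by linarith)
    linarith
  have hC := hA.trans hB
  rw [Real.div_rpow hm hM.le, Real.div_rpow hn hN.le, div_mul_div_comm] at hC
  exact (div_le_one (by positivity)).1 hC

/-- For `α ∈ (0,1)`, `β, γ ∈ (0,1)` with `β + γ = 1` and the tangency point
`δ = (2γ + αβ − αγ − √(α(4βγ + αβ² + αγ² − 2αβγ))) / (2γ)`:
every `m, n ∈ [0,1)` with `(1 − m)(1 − n) ≥ α` satisfy the tangent cut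
`m^β * n^γ ≤ (1 − α/(1−δ))^β * δ^γ` (real powers). -/
theorem tangent_cut_is_relaxation
    (α β γ : ℝ) (hα : α ∈ Set.Ioo (0 : ℝ) 1)
    (hβ : β ∈ Set.Ioo (0 : ℝ) 1) (hγ : γ ∈ Set.Ioo (0 : ℝ) 1)
    (hβγ : β + γ = 1) :
    ∀ m ∈ Set.Ico (0 : ℝ) 1, ∀ n ∈ Set.Ico (0 : ℝ) 1,
      (1 - m) * (1 - n) ≥ α →
      m ^ β * n ^ γ ≤
        (1 - α / (1 -
            (2 * γ + α * β - α * γ -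
              Real.sqrt (α * (4 * β * γ + α * β ^ 2 + α * γ ^ 2 - 2 * α * β * γ))) /
            (2 * γ))) ^ β *
          ((2 * γ + α * β - α * γ -
              Real.sqrt (α * (4 * β * γ + α * β ^ 2 + α * γ ^ 2 - 2 * α * β * γ))) /
            (2 * γ)) ^ γ := by
  obtain ⟨ha, ha1⟩ := hα
  obtain ⟨hb, hb1⟩ := hβ
  obtain ⟨hc, hc1⟩ := hγ
  intro m hm n hn h
  have hD : 0 ≤ α * (4 * β * γ + α * β ^ 2 + α * γ ^ 2 - 2 * α * β * γ) := by
    have : α * (4 * β * γ + α * β ^ 2 + α * γ ^ 2 - 2 * α * β * γ)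
      = 4 * (α * β * γ) + (α * (β - γ)) ^ 2 := by ring
    rw [this]; positivity
  have hr := Real.sq_sqrt hD
  have hr0 := Real.sqrt_nonneg (α * (4 * β * γ + α * β ^ 2 + α * γ ^ 2 - 2 * α * β * γ))
  set r := Real.sqrt (α * (4 * β * γ + α * β ^ 2 + α * γ ^ 2 - 2 * α * β * γ)) with hrdef
  set δ := (2 * γ + α * β - α * γ - r) / (2 * γ) with hδ
  have hrδ : r = 2 * γ * (1 - δ) + α * (β - γ) := by
    rw [hδ]; field_simp; ring
  have hac : 0 < α * γ := by positivity
  have hlt : r < 2 * γ + α * β - α * γ := by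
    apply lt_of_pow_lt_pow_left₀ 2
    · nlinarith [mul_pos ha hb]
    · rw [hr]
      nlinarith [mul_pos (mul_pos hc hc) (sub_pos.2 ha1)]
  have hgt : α < 1 - δ := by
    have : α * (β + γ) < r := by
      apply lt_of_pow_lt_pow_left₀ 2 hr0
      rw [hr]
      nlinarith [mul_pos (mul_pos hac hb) (sub_pos.2 ha1)]
    have h2 : 2 * γ * α < 2 * γ * (1 - δ) := by linarith
    exact lt_of_mul_lt_mul_left h2 (by positivity)
  have hδ0 : 0 < δ := by
    rw [hδ]; apply div_pos <;> linarith
  have hs0 : 0 < 1 - δ := by linarith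
  have hq : γ * (1 - δ) ^ 2 + α * (β - γ) * (1 - δ) - α * β = 0 := by
    rw [hrδ] at hr
    have : (4 * γ) * (γ * (1 - δ) ^ 2 + α * (β - γ) * (1 - δ) - α * β) = 0 := by
      linear_combination hr
    exact (mul_eq_zero.1 this).resolve_left (by positivity)
  refine cut_aux α β γ m n _ δ hb hc hβγ ?_ ?_ hδ0 (by linarith) ?_ ?_ hm.1 hm.2 hn.1 hn.2 h
  · rw [sub_pos, div_lt_one hs0]; exact hgt
  · have : 0 < α / (1 - δ) := by positivity
    linarith
  · have := hs0.ne'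
    clear_value δ
    field_simp
    ring
  · have := hs0.ne'
    clear_value δ
    field_simp
    linear_combination -hq
end

section
/- Let J and K be finite index sets, p : J → (0,1), q : K → (0,1), y : J → {0,1}, z : K → {0,1}, let α ∈ (0,1), let β, γ ∈ (0,1) with β + γ = 1, and define δ = (2γ + αβ − αγ − √(α(4βγ + αβ² + αγ² − 2αβγ)))/(2γ). If (1 − ∏_{j∈J} p_j^{y_j})·(1 − ∏_{k∈K} q_k^{z_k}) ≥ α, then: (i) ∑_{j∈J} y_j·ln(p_j) ≤ ln(1−α); (ii) ∑_{k∈K} z_k·ln(q_k) ≤ ln(1−α); and (iii) β·∑_{j∈J} y_j·ln(p_j) + γ·∑_{k∈K} z_k·ln(q_k) ≤ ln((1 − α/(1−δ))^β · δ^γ). -/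
/-- For finite index sets `J, K`, failure probabilities `p : J → (0,1)`,
`q : K → (0,1)`, binary selections `y : J → {0,1}`, `z : K → {0,1}`, `α ∈ (0,1)`,
weights `β, γ ∈ (0,1)` with `β + γ = 1`, and the tangency point
`δ = (2γ + αβ − αγ − √(α(4βγ + αβ² + αγ² − 2αβγ))) / (2γ)`:
if `(1 − ∏ j, p j ^ y j) * (1 − ∏ k, q k ^ z k) ≥ α`, then the three linear
approximation constraints (i)–(iii) hold. -/
theorem nonlinear_constraint_implies_linear_approx
    {J K : Type*} [Fintype J] [Fintype K]
    (p : J → ℝ) (q : K → ℝ)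
    (hp : ∀ j, p j ∈ Set.Ioo (0 : ℝ) 1) (hq : ∀ k, q k ∈ Set.Ioo (0 : ℝ) 1)
    (y : J → ℕ) (z : K → ℕ)
    (hy : ∀ j, y j = 0 ∨ y j = 1) (hz : ∀ k, z k = 0 ∨ z k = 1)
    (α β γ : ℝ) (hα : α ∈ Set.Ioo (0 : ℝ) 1)
    (hβ : β ∈ Set.Ioo (0 : ℝ) 1) (hγ : γ ∈ Set.Ioo (0 : ℝ) 1)
    (hβγ : β + γ = 1)
    (δ : ℝ)
    (hδ : δ = (2 * γ + α * β - α * γ -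
        Real.sqrt (α * (4 * β * γ + α * β ^ 2 + α * γ ^ 2 - 2 * α * β * γ))) /
      (2 * γ))
    (hcover : (1 - ∏ j, p j ^ y j) * (1 - ∏ k, q k ^ z k) ≥ α) :
    (∑ j, (y j : ℝ) * Real.log (p j) ≤ Real.log (1 - α)) ∧
    (∑ k, (z k : ℝ) * Real.log (q k) ≤ Real.log (1 - α)) ∧
    (β * ∑ j, (y j : ℝ) * Real.log (p j) + γ * ∑ k, (z k : ℝ) * Real.log (q k) ≤
      Real.log ((1 - α / (1 - δ)) ^ β * δ ^ γ)) := by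
  obtain ⟨hα0, hα1⟩ := hα
  obtain ⟨hβ0, hβ1⟩ := hβ
  obtain ⟨hγ0, hγ1⟩ := hγ
  have hsP : ∑ j, (y j : ℝ) * Real.log (p j) = Real.log (∏ j, p j ^ y j) := by
    rw [Real.log_prod (fun j _ => (pow_pos (hp j).1 _).ne')]
    exact Finset.sum_congr rfl (fun j _ => (Real.log_pow _ _).symm)
  have hsQ : ∑ k, (z k : ℝ) * Real.log (q k) = Real.log (∏ k, q k ^ z k) := by
    rw [Real.log_prod (fun j _ => (pow_pos (hq j).1 _).ne')]
    exact Finset.sum_congr rfl (fun j _ => (Real.log_pow _ _).symm)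
  have hP0 : 0 < ∏ j, p j ^ y j := Finset.prod_pos (fun j _ => pow_pos (hp j).1 _)
  have hQ0 : 0 < ∏ k, q k ^ z k := Finset.prod_pos (fun j _ => pow_pos (hq j).1 _)
  have hP1 : ∏ j, p j ^ y j ≤ 1 := Finset.prod_le_one (fun j _ => (pow_pos (hp j).1 _).le)
    (fun j _ => pow_le_one₀ (hp j).1.le (hp j).2.le)
  have hQ1 : ∏ k, q k ^ z k ≤ 1 := Finset.prod_le_one (fun j _ => (pow_pos (hq j).1 _).le)
    (fun j _ => pow_le_one₀ (hq j).1.le (hq j).2.le)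
  rw [hsP, hsQ]
  generalize (∏ j, p j ^ y j) = P at *
  generalize (∏ k, q k ^ z k) = Q at *
  refine ⟨Real.log_le_log hP0 (by nlinarith), Real.log_le_log hQ0 (by nlinarith), ?_⟩
  obtain ⟨S, hS⟩ : ∃ S, S = Real.sqrt (α * (4 * β * γ + α * β ^ 2 + α * γ ^ 2 - 2 * α * β * γ)) :=
    ⟨_, rfl⟩
  have hpos : 0 < α * β * γ := by positivity
  have hS2 : S ^ 2 = (α * (β - γ)) ^ 2 + 4 * (α * β * γ) := by
    rw [hS, Real.sq_sqrt]
    · ring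
    · nlinarith [sq_nonneg (α * (β - γ))]
  have hS0 : 0 ≤ S := hS ▸ Real.sqrt_nonneg _
  have hSX : α * (β - γ) < S := by
    by_contra h
    push Not at h
    nlinarith
  rw [← hS] at hδ
  obtain ⟨u, hu⟩ : ∃ u, u = 1 - δ := ⟨_, rfl⟩
  have hu' : 2 * γ * u = S - α * (β - γ) := by
    rw [hu, hδ]; field_simp; ring
  have hu0 : 0 < u := by
    by_contra h
    push Not at h
    nlinarith
  have hf : γ * u ^ 2 + α * (β - γ) * u - α * β = 0 := by
    have : S = 2 * γ * u + α * (β - γ) := by linarith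
    rw [this] at hS2
    have h4 : (4 * γ) * (γ * u ^ 2 + α * (β - γ) * u - α * β) = 0 := by linarith
    rcases mul_eq_zero.mp h4 with h | h
    · linarith
    · exact h
  have huα : 0 < u - α := by
    have h1 : (u - α) * (γ * u + α * β) = α * β * (1 - α) := by linear_combination hf
    have h2 : 0 < α * β * (1 - α) := mul_pos (by positivity) (by linarith)
    rw [← h1] at h2
    exact pos_of_mul_pos_left h2 (by positivity)
  have hu1 : 0 < 1 - u := by
    have h1 : (1 - u) * (γ * u + γ * (1 - α) + α * β) = γ * (1 - α) := by
      linear_combination -hf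
    have h3 : 0 < γ * (1 - α) := mul_pos (by positivity) (by linarith)
    have h2 := h3
    rw [← h1] at h2
    exact pos_of_mul_pos_left h2 (by positivity)
  have hd : δ = 1 - u := by linarith
  rw [← hu, hd]
  have hA : 0 < 1 - α / u := by
    rw [sub_pos, div_lt_one hu0]; linarith
  rw [Real.log_mul (Real.rpow_pos_of_pos hA _).ne' (Real.rpow_pos_of_pos hu1 _).ne',
    Real.log_rpow hA, Real.log_rpow hu1]
  have l1 := Real.log_le_sub_one_of_pos (div_pos hP0 hA)
  have l2 := Real.log_le_sub_one_of_pos (div_pos hQ0 hu1)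
  rw [Real.log_div hP0.ne' hA.ne'] at l1
  rw [Real.log_div hQ0.ne' hu1.ne'] at l2
  have m1 := mul_le_mul_of_nonneg_left l1 hβ0.le
  have m2 := mul_le_mul_of_nonneg_left l2 hγ0.le
  have e1 : β * (P / (1 - α / u) - 1) = - (γ * u / (1 - u)) * ((1 - P) * u / α - 1) := by
    have hA' : 1 - α / u = (u - α) / u := by field_simp
    have hB : β = γ * u * (u - α) / (α * (1 - u)) := by
      field_simp
      linear_combination -hf
    rw [hA', hB]
    field_simp
    ring
  have e2 : γ * (Q / (1 - u) - 1) = - (γ * u / (1 - u)) * ((1 - Q) / u - 1) := by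
    field_simp
    ring
  have key : 2 ≤ (1 - P) * u / α + (1 - Q) / u := by
    have n1 : 0 ≤ (1 - P) * u / α := by
      have : 0 ≤ 1 - P := by linarith
      positivity
    have n2 : 0 ≤ (1 - Q) / u := by
      have : 0 ≤ 1 - Q := by linarith
      positivity
    have n3 : 1 ≤ ((1 - P) * u / α) * ((1 - Q) / u) := by
      have : ((1 - P) * u / α) * ((1 - Q) / u) = (1 - P) * (1 - Q) / α := by field_simp
      rw [this, le_div_iff₀ hα0]; linarith
    nlinarith [sq_nonneg ((1 - P) * u / α - (1 - Q) / u)]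
  have hc : 0 ≤ γ * u / (1 - u) := by positivity
  have := mul_nonneg hc (sub_nonneg.mpr key)
  rw [e1] at m1
  rw [e2] at m2
  linarith
end

section
/- Let I, J, K be finite index sets, p : I × J → (0,1), q : I × K → (0,1), c¹ : J → ℝ, c² : K → ℝ, α ∈ (0,1), β, γ ∈ (0,1) with β + γ = 1, and δ = (2γ + αβ − αγ − √(α(4βγ + αβ² + αγ² − 2αβγ)))/(2γ). Let Ω be the set of pairs (y, z) of binary vectors y : J → {0,1}, z : K → {0,1} with (1 − ∏_j p_{ij}^{y_j})(1 − ∏_k q_{ik}^{z_k}) ≥ α for all i ∈ I, and let Ω_LA be the set of binary pairs (y, z) satisfying, for all i ∈ I: ∑_j y_j ln(p_{ij}) ≤ ln(1−α), ∑_k z_k ln(q_{ik}) ≤ ln(1−α), and β∑_j y_j ln(p_{ij}) + γ∑_k z_k ln(q_{ik}) ≤ ln((1 − α/(1−δ))^β δ^γ). If (y*, z*) minimizes the cost c(y,z) = ∑_j c¹_j y_j + ∑_k c²_k z_k over Ω_LA, then for every (y, z) ∈ Ω one has c(y*, z*) ≤ c(y, z); i.e., the optimum of the linearly approximated problem is a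 lower bound on the optimal objective value of the original nonlinear problem. -/
open scoped BigOperators

/-- The nonlinear feasible region `Ω` of the GUTLCSCP: binary pairs `(y, z)` with
`(1 − ∏ j, p (i,j) ^ y j) * (1 − ∏ k, q (i,k) ^ z k) ≥ α` for all demand nodes `i`. -/
def OmegaNL {I J K : Type*} [Fintype J] [Fintype K]
    (p : I × J → ℝ) (q : I × K → ℝ) (α : ℝ) :
    Set ((J → ℕ) × (K → ℕ)) :=
  {w | (∀ j, w.1 j = 0 ∨ w.1 j = 1) ∧ (∀ k, w.2 k = 0 ∨ w.2 k = 1) ∧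
    ∀ i : I, (1 - ∏ j, p (i, j) ^ w.1 j) * (1 - ∏ k, q (i, k) ^ w.2 k) ≥ α}

/-- The linearly approximated feasible region `Ω_LA` of the GUTLCSCP-LA: binary pairs
`(y, z)` satisfying, for all demand nodes `i`, the three relaxed linear constraints
with tangency point `δ`. -/
def OmegaLA {I J K : Type*} [Fintype J] [Fintype K]
    (p : I × J → ℝ) (q : I × K → ℝ) (α β γ δ : ℝ) :
    Set ((J → ℕ) × (K → ℕ)) :=
  {w | (∀ j, w.1 j = 0 ∨ w.1 j = 1) ∧ (∀ k, w.2 k = 0 ∨ w.2 k = 1) ∧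
    ∀ i : I,
      (∑ j, (w.1 j : ℝ) * Real.log (p (i, j)) ≤ Real.log (1 - α)) ∧
      (∑ k, (w.2 k : ℝ) * Real.log (q (i, k)) ≤ Real.log (1 - α)) ∧
      (β * ∑ j, (w.1 j : ℝ) * Real.log (p (i, j)) +
          γ * ∑ k, (w.2 k : ℝ) * Real.log (q (i, k)) ≤
        Real.log ((1 - α / (1 - δ)) ^ β * δ ^ γ))}

/-- The building cost `c(y,z) = ∑ j, c¹ j * y j + ∑ k, c² k * z k`. -/
def coverCost {J K : Type*} [Fintype J] [Fintype K]
    (c₁ : J → ℝ) (c₂ : K → ℝ) (w : (J → ℕ) × (K → ℕ)) : ℝ :=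
  ∑ j, c₁ j * (w.1 j : ℝ) + ∑ k, c₂ k * (w.2 k : ℝ)

theorem aux_u (α β γ δ : ℝ) (hα : α ∈ Set.Ioo (0 : ℝ) 1)
    (hβ : β ∈ Set.Ioo (0 : ℝ) 1) (hγ : γ ∈ Set.Ioo (0 : ℝ) 1)
    (hδ : δ = (2 * γ + α * β - α * γ -
        Real.sqrt (α * (4 * β * γ + α * β ^ 2 + α * γ ^ 2 - 2 * α * β * γ))) /
      (2 * γ)) :
    α < 1 - δ ∧ 1 - δ < 1 ∧ α * β * (1 - (1 - δ)) = γ * (1 - δ) * ((1 - δ) - α) := by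
  obtain ⟨a0, a1⟩ := hα
  obtain ⟨b0, b1⟩ := hβ
  obtain ⟨g0, g1⟩ := hγ
  have hbg := mul_pos b0 g0
  have hnn : 0 ≤ α * (4 * β * γ + α * β ^ 2 + α * γ ^ 2 - 2 * α * β * γ) := by
    apply mul_nonneg a0.le
    nlinarith [mul_nonneg a0.le (sq_nonneg (β - γ))]
  have hS := Real.sq_sqrt hnn
  have hS0 := Real.sqrt_nonneg (α * (4 * β * γ + α * β ^ 2 + α * γ ^ 2 - 2 * α * β * γ))
  set S := Real.sqrt (α * (4 * β * γ + α * β ^ 2 + α * γ ^ 2 - 2 * α * β * γ)) with hSd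
  clear_value S
  have hSu : S = 2 * γ * (1 - δ) - α * (γ - β) := by
    rw [hδ]; field_simp; ring
  set u := 1 - δ with hu
  clear_value u
  have hquad : α * β * (1 - u) = γ * u * (u - α) := by
    have : 4 * γ * (α * β * (1 - u)) = 4 * γ * (γ * u * (u - α)) := by
      rw [hSu] at hS; linarith
    exact mul_left_cancel₀ (by positivity) this
  have h0 : 0 < u := by
    have h : α * (β - γ) < S := by
      apply lt_of_pow_lt_pow_left₀ 2 hS0
      rw [hS]; nlinarith [mul_pos a0 hbg]
    have : 0 < 2 * γ * u := by linarith
    exact pos_of_mul_pos_right this (by positivity)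
  have hab := mul_pos a0 b0
  have hgu := mul_pos g0 h0
  have hau : α < u := by
    by_contra h
    push Not at h
    have h1 : 0 < α * β * (1 - u) := mul_pos hab (by linarith)
    have h2 : 0 ≤ γ * u * (α - u) := mul_nonneg hgu.le (by linarith)
    linarith
  refine ⟨hau, ?_, hquad⟩
  have h1 : 0 < α * β * (1 - u) := by rw [hquad]; exact mul_pos hgu (by linarith)
  have := pos_of_mul_pos_right h1 hab.le
  linarith

theorem aux_main (α β γ u P Q : ℝ) (a0 : 0 < α) (b0 : 0 < β) (g0 : 0 < γ)
    (h1 : α < u) (h2 : u < 1) (hq : α * β * (1 - u) = γ * u * (u - α))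
    (P0 : 0 < P) (Q0 : 0 < Q) (P1 : P ≤ 1) (Q1 : Q ≤ 1) (h : (1 - P) * (1 - Q) ≥ α) :
    β * Real.log P + γ * Real.log Q ≤ Real.log ((1 - α / u) ^ β * (1 - u) ^ γ) := by
  have hu : 0 < u := by linarith
  have hA : 0 < 1 - α / u := by
    rw [sub_pos, div_lt_one hu]; exact h1
  have hB : 0 < 1 - u := by linarith
  rw [Real.log_mul (Real.rpow_pos_of_pos hA _).ne' (Real.rpow_pos_of_pos hB _).ne',
    Real.log_rpow hA, Real.log_rpow hB]
  have e1 := Real.log_le_sub_one_of_pos (div_pos P0 hA)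
  have e2 := Real.log_le_sub_one_of_pos (div_pos Q0 hB)
  rw [Real.log_div P0.ne' hA.ne'] at e1
  rw [Real.log_div Q0.ne' hB.ne'] at e2
  have f1 := mul_le_mul_of_nonneg_left e1 b0.le
  have f2 := mul_le_mul_of_nonneg_left e2 g0.le
  have hua : 0 < u - α := by linarith
  have key : β * (P / (1 - α / u) - 1) + γ * (Q / (1 - u) - 1)
      = β / (u - α) / u * (2 * α * u - u ^ 2 * (1 - P) - α * (1 - Q)) := by
    have hg : γ = α * β * (1 - u) / (u * (u - α)) := by
      field_simp; linarith
    have hA' : 1 - α / u = (u - α) / u := by field_simp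
    rw [hA', hg]; field_simp; ring
  have amgm : 2 * α * u - u ^ 2 * (1 - P) - α * (1 - Q) ≤ 0 := by
    have hp : 0 < 1 - P := by
      rcases (sub_nonneg.2 P1).lt_or_eq with h' | h'
      · exact h'
      · rw [← h'] at h; linarith
    have : (1 - P) * (2 * α * u - u ^ 2 * (1 - P) - α * (1 - Q)) ≤ 0 := by
      nlinarith [sq_nonneg (u * (1 - P) - α)]
    exact nonpos_of_mul_nonpos_right this hp
  have := mul_nonneg (div_pos (div_pos b0 hua) hu).le (neg_nonneg.2 amgm)
  linarith

theorem aux_prod {J : Type*} [Fintype J] (p : J → ℝ) (hp : ∀ j, p j ∈ Set.Ioo (0 : ℝ) 1)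
    (y : J → ℕ) : 0 < ∏ j, p j ^ y j ∧ ∏ j, p j ^ y j ≤ 1 ∧
      ∑ j, (y j : ℝ) * Real.log (p j) = Real.log (∏ j, p j ^ y j) := by
  refine ⟨Finset.prod_pos fun j _ => pow_pos (hp j).1 _,
    Finset.prod_le_one (fun j _ => (pow_pos (hp j).1 _).le)
      fun j _ => pow_le_one₀ (hp j).1.le (hp j).2.le, ?_⟩
  rw [Real.log_prod (fun j _ => (pow_pos (hp j).1 _).ne')]
  simp [Real.log_pow]

/-- Proposition 1 (first part): if `(y*, z*)` minimizes the cost over the linearly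
approximated feasible region `Ω_LA`, then its cost is a lower bound on the cost of
every point of the original nonlinear feasible region `Ω`. -/
theorem la_optimum_is_lower_bound
    {I J K : Type*} [Fintype I] [Fintype J] [Fintype K]
    (p : I × J → ℝ) (q : I × K → ℝ)
    (hp : ∀ ij, p ij ∈ Set.Ioo (0 : ℝ) 1) (hq : ∀ ik, q ik ∈ Set.Ioo (0 : ℝ) 1)
    (c₁ : J → ℝ) (c₂ : K → ℝ)
    (α β γ : ℝ) (hα : α ∈ Set.Ioo (0 : ℝ) 1)
    (hβ : β ∈ Set.Ioo (0 : ℝ) 1) (hγ : γ ∈ Set.Ioo (0 : ℝ) 1)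
    (hβγ : β + γ = 1)
    (δ : ℝ)
    (hδ : δ = (2 * γ + α * β - α * γ -
        Real.sqrt (α * (4 * β * γ + α * β ^ 2 + α * γ ^ 2 - 2 * α * β * γ))) /
      (2 * γ))
    (wstar : (J → ℕ) × (K → ℕ))
    (hmem : wstar ∈ OmegaLA p q α β γ δ)
    (hopt : ∀ w ∈ OmegaLA p q α β γ δ, coverCost c₁ c₂ wstar ≤ coverCost c₁ c₂ w) :
    ∀ w ∈ OmegaNL p q α, coverCost c₁ c₂ wstar ≤ coverCost c₁ c₂ w := by
  intro w hw
  apply hopt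
  obtain ⟨h1, h2, h3⟩ := hw
  refine ⟨h1, h2, fun i => ?_⟩
  obtain ⟨P0, P1, hP⟩ := aux_prod (fun j => p (i, j)) (fun j => hp _) w.1
  obtain ⟨Q0, Q1, hQ⟩ := aux_prod (fun k => q (i, k)) (fun k => hq _) w.2
  have h := h3 i
  rw [hP, hQ]
  obtain ⟨u1, u2, u3⟩ := aux_u α β γ δ hα hβ hγ hδ
  have hm := aux_main α β γ (1 - δ) _ _ hα.1 hβ.1 hγ.1 u1 u2 u3 P0 Q0 P1 Q1 h
  rw [sub_sub_cancel] at hm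
  refine ⟨Real.log_le_log P0 ?_, Real.log_le_log Q0 ?_, hm⟩
  · nlinarith [mul_nonneg (sub_nonneg.2 P1) Q0.le]
  · nlinarith [mul_nonneg (sub_nonneg.2 Q1) P0.le]
end

section
/- With the same data as above (finite sets I, J, K; p : I × J → (0,1); q : I × K → (0,1); α ∈ (0,1); β, γ ∈ (0,1) with β + γ = 1; δ as defined; Ω the nonlinear feasible region; Ω_LA the linearly approximated feasible region): if Ω_LA is empty, then Ω is empty. Equivalently, if the linearly approximated problem has no feasible binary solution, then the original nonlinear problem has no feasible binary solution. -/
open scoped BigOperators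

lemma delta_facts (α β γ δ : ℝ) (hα : α ∈ Set.Ioo (0 : ℝ) 1)
    (hβ : β ∈ Set.Ioo (0 : ℝ) 1) (hγ : γ ∈ Set.Ioo (0 : ℝ) 1)
    (hβγ : β + γ = 1)
    (hδ : δ = (2 * γ + α * β - α * γ -
        Real.sqrt (α * (4 * β * γ + α * β ^ 2 + α * γ ^ 2 - 2 * α * β * γ))) /
      (2 * γ)) : 0 < δ ∧ δ < 1 - α ∧ γ * (1 - δ - α) * (1 - δ) = β * α * δ := by
  obtain ⟨a0, a1⟩ := hα
  obtain ⟨b0, b1⟩ := hβ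
  obtain ⟨g0, g1⟩ := hγ
  have hbg : 0 < β * γ := mul_pos b0 g0
  set E := α * (4 * β * γ + α * β ^ 2 + α * γ ^ 2 - 2 * α * β * γ) with hE
  have hE' : E = α ^ 2 * (β - γ) ^ 2 + 4 * α * (β * γ) := by rw [hE]; ring
  have hE0 : 0 ≤ E := by rw [hE']; positivity
  have hs : Real.sqrt E ^ 2 = E := Real.sq_sqrt hE0
  have hsd : Real.sqrt E = 2 * γ + α * β - α * γ - 2 * γ * δ := by
    rw [hδ]; field_simp; ring
  have h1 : Real.sqrt E < 2 * γ + α * β - α * γ := by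
    have hpos : 0 < 2 * γ + α * β - α * γ := by nlinarith [mul_pos a0 b0]
    rw [Real.sqrt_lt' hpos, hE']
    have : 0 < γ ^ 2 * (1 - α) := mul_pos (by positivity) (by linarith)
    nlinarith
  have h2 : α < Real.sqrt E := by
    apply Real.lt_sqrt_of_sq_lt
    have hb : β = 1 - γ := by linarith
    have : 0 < α * (1 - α) * (β * γ) := mul_pos (mul_pos a0 (by linarith)) hbg
    rw [hE']
    subst hb
    nlinarith
  refine ⟨?_, ?_, ?_⟩
  · have : 0 < γ * δ := by linarith
    exact (mul_pos_iff_of_pos_left g0).1 this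
  · have hb : α * β = α - α * γ := by rw [← mul_one_sub]; congr 1; linarith
    have : 0 < γ * (1 - α - δ) := by nlinarith
    have := (mul_pos_iff_of_pos_left g0).1 this
    linarith
  · rw [hsd, hE'] at hs
    have : γ * (γ * (1 - δ - α) * (1 - δ)) = γ * (β * α * δ) := by nlinarith
    exact mul_left_cancel₀ g0.ne' this

lemma key_ineq (α β γ δ x v : ℝ) (a0 : 0 < α) (b0 : 0 < β) (g0 : 0 < γ)
    (d0 : 0 < δ) (d1 : δ < 1 - α) (hq : γ * (1 - δ - α) * (1 - δ) = β * α * δ)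
    (x0 : 0 < x) (v0 : 0 < v) (x1 : x < 1) (v1 : v < 1) (h : α ≤ (1 - x) * (1 - v)) :
    β * Real.log x + γ * Real.log v ≤ Real.log ((1 - α / (1 - δ)) ^ β * δ ^ γ) := by
  have hD : 0 < 1 - δ := by linarith
  obtain ⟨A, hA⟩ : ∃ A, A = α / (1 - δ) := ⟨_, rfl⟩
  have hAD : A * (1 - δ) = α := by rw [hA]; field_simp
  have hA0 : 0 < A := by rw [hA]; positivity
  rw [← hA]
  have ha : 0 < 1 - A := by
    have : 0 < (1 - A) * (1 - δ) := by nlinarith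
    exact (mul_pos_iff_of_pos_right hD).1 this
  rw [Real.log_mul (Real.rpow_pos_of_pos ha _).ne' (Real.rpow_pos_of_pos d0 _).ne',
    Real.log_rpow ha, Real.log_rpow d0]
  have l1 : Real.log x - Real.log (1 - A) ≤ x / (1 - A) - 1 := by
    rw [← Real.log_div x0.ne' ha.ne']
    exact Real.log_le_sub_one_of_pos (by positivity)
  have l2 : Real.log v - Real.log δ ≤ v / δ - 1 := by
    rw [← Real.log_div v0.ne' d0.ne']
    exact Real.log_le_sub_one_of_pos (by positivity)
  have hk : γ * (1 - A) * (1 - δ) = β * A * δ := by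
    have : (1 - δ) * (γ * (1 - A) * (1 - δ)) = (1 - δ) * (β * A * δ) := by
      rw [← hAD] at hq
      linear_combination hq
    exact mul_left_cancel₀ hD.ne' this
  have hc : 2 * α ≤ (1 - x) * (1 - δ) + (1 - v) * A := by
    have hX : 0 < 1 - x := by linarith
    have hV : 0 < 1 - v := by linarith
    have hm : α * α ≤ ((1 - x) * (1 - v)) * α := mul_le_mul_of_nonneg_right h a0.le
    have hm' : ((1 - x) * (1 - δ)) * ((1 - v) * A) = ((1 - x) * (1 - v)) * α := by
      rw [← hAD]; ring
    have hs : 0 < (1 - x) * (1 - δ) + (1 - v) * A := by positivity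
    refine (pow_le_pow_iff_left₀ (by positivity) hs.le two_ne_zero).1 ?_
    nlinarith [sq_nonneg ((1 - x) * (1 - δ) - (1 - v) * A)]
  have hlin : β * (x / (1 - A) - 1) + γ * (v / δ - 1) ≤ 0 := by
    have e : β * (x / (1 - A) - 1) + γ * (v / δ - 1)
        = β * (2 * α - ((1 - x) * (1 - δ) + (1 - v) * A)) / ((1 - A) * (1 - δ)) := by
      have hg : γ = β * A * δ / ((1 - A) * (1 - δ)) := by
        field_simp; linarith
      rw [hg, ← hAD]; field_simp; ring
    rw [e]
    apply div_nonpos_of_nonpos_of_nonneg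
    · exact mul_nonpos_of_nonneg_of_nonpos b0.le (by linarith)
    · positivity
  have := mul_le_mul_of_nonneg_left l1 b0.le
  have := mul_le_mul_of_nonneg_left l2 g0.le
  linarith

lemma log_prod_pow {J : Type*} [Fintype J] (f : J → ℝ) (y : J → ℕ)
    (hf : ∀ j, f j ∈ Set.Ioo (0 : ℝ) 1) :
    0 < ∏ j, f j ^ y j ∧ ∏ j, f j ^ y j ≤ 1 ∧
      ∑ j, (y j : ℝ) * Real.log (f j) = Real.log (∏ j, f j ^ y j) := by
  refine ⟨Finset.prod_pos fun j _ => pow_pos (hf j).1 _,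
    Finset.prod_le_one (fun j _ => (pow_pos (hf j).1 _).le)
      fun j _ => pow_le_one₀ (hf j).1.le (hf j).2.le, ?_⟩
  rw [Real.log_prod (fun j _ => (pow_pos (hf j).1 _).ne')]
  simp [Real.log_pow]

/-- Proposition 2: if the linearly approximated feasible region `Ω_LA` is empty, then
the original nonlinear feasible region `Ω` is empty as well. -/
theorem la_infeasible_implies_infeasible
    {I J K : Type*} [Fintype I] [Fintype J] [Fintype K]
    (p : I × J → ℝ) (q : I × K → ℝ)
    (hp : ∀ ij, p ij ∈ Set.Ioo (0 : ℝ) 1) (hq : ∀ ik, q ik ∈ Set.Ioo (0 : ℝ) 1)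
    (α β γ : ℝ) (hα : α ∈ Set.Ioo (0 : ℝ) 1)
    (hβ : β ∈ Set.Ioo (0 : ℝ) 1) (hγ : γ ∈ Set.Ioo (0 : ℝ) 1)
    (hβγ : β + γ = 1)
    (δ : ℝ)
    (hδ : δ = (2 * γ + α * β - α * γ -
        Real.sqrt (α * (4 * β * γ + α * β ^ 2 + α * γ ^ 2 - 2 * α * β * γ))) /
      (2 * γ))
    (hLA : OmegaLA p q α β γ δ = (∅ : Set ((J → ℕ) × (K → ℕ)))) :
    OmegaNL p q α = (∅ : Set ((J → ℕ) × (K → ℕ))) := by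
  obtain ⟨d0, d1, hquad⟩ := delta_facts α β γ δ hα hβ hγ hβγ hδ
  rw [Set.eq_empty_iff_forall_notMem] at hLA ⊢
  rintro ⟨y, z⟩ ⟨hy, hz, h⟩
  refine hLA (y, z) ⟨hy, hz, fun i => ?_⟩
  have hi := h i
  dsimp only at hi ⊢
  obtain ⟨x0, x1, ex⟩ := log_prod_pow (fun j => p (i, j)) y (fun j => hp _)
  obtain ⟨v0, v1, ev⟩ := log_prod_pow (fun k => q (i, k)) z (fun k => hq _)
  rw [ex, ev]
  generalize (∏ j, p (i, j) ^ y j) = x at *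
  generalize (∏ k, q (i, k) ^ z k) = v at *
  have a0 := hα.1
  have hx1 : x < 1 := lt_of_le_of_ne x1 (by rintro rfl; simp at hi; linarith)
  have hv1 : v < 1 := lt_of_le_of_ne v1 (by rintro rfl; simp at hi; linarith)
  refine ⟨Real.log_le_log x0 (by nlinarith), Real.log_le_log v0 (by nlinarith), ?_⟩
  exact key_ineq α β γ δ x v a0 hβ.1 hγ.1 d0 d1 hquad x0 v0 hx1 hv1 hi
end

section
/- Let n ∈ ℕ, d : Fin n → ℝ with d_j ≥ 0 for all j, and Γ ≥ 0 a real number. Define the primal value P = sSup { ∑_j u_j·d_j : u : Fin n → ℝ, 0 ≤ u_j ≤ 1 for all j, ∑_j u_j ≤ Γ } and the dual value D = sInf { ∑_j ζ_j + Γ·η : ζ : Fin n → ℝ, η ∈ ℝ, ζ_j ≥ 0 for all j, η ≥ 0, ζ_j + η ≥ d_j for all j }. Then P = D. -/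
theorem bs_weak (n : ℕ) (d : Fin n → ℝ) (Γ : ℝ) (u ζ : Fin n → ℝ) (η : ℝ)
    (hu : ∀ j, 0 ≤ u j ∧ u j ≤ 1) (hs : ∑ j, u j ≤ Γ) (hz : ∀ j, 0 ≤ ζ j) (hη : 0 ≤ η)
    (hd : ∀ j, d j ≤ ζ j + η) : ∑ j, u j * d j ≤ ∑ j, ζ j + Γ * η := by
  have h1 : ∑ j, u j * d j ≤ ∑ j, (ζ j + u j * η) := by
    refine Finset.sum_le_sum fun j _ => ?_
    nlinarith [mul_le_mul_of_nonneg_left (hd j) (hu j).1,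
      mul_le_mul_of_nonneg_right (hu j).2 (hz j)]
  rw [Finset.sum_add_distrib, ← Finset.sum_mul] at h1
  have := mul_le_mul_of_nonneg_right hs hη
  linarith

theorem bs_exists (n : ℕ) (d : Fin n → ℝ) (hd : ∀ j, 0 ≤ d j) (Γ : ℝ) (hΓ : 0 ≤ Γ) :
    ∃ (u : Fin n → ℝ) (η : ℝ), (∀ j, 0 ≤ u j ∧ u j ≤ 1) ∧ 0 ≤ η ∧
      (∑ j, u j = Γ ∨ (η = 0 ∧ ∑ j, u j ≤ Γ)) ∧
      (∀ j, η < d j → u j = 1) ∧ (∀ j, d j < η → u j = 0) := by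
  classical
  by_cases hn : (n : ℝ) ≤ Γ
  · exact ⟨fun _ => 1, 0, fun _ => by norm_num, le_rfl, Or.inr ⟨rfl, by simpa using hn⟩,
      fun _ _ => rfl, fun j h => absurd (hd j) (not_le.mpr h)⟩
  push Not at hn
  have hn0 : 0 < n := by
    have : (0 : ℝ) < n := lt_of_le_of_lt hΓ hn
    exact_mod_cast this
  let S : Finset (Fin n) :=
    Finset.univ.filter fun j => ∑ i, (if d j < d i then (1 : ℝ) else 0) ≤ Γ
  have hS : S.Nonempty := by
    obtain ⟨m, -, hm⟩ := Finset.exists_max_image Finset.univ d ⟨⟨0, hn0⟩, Finset.mem_univ _⟩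
    refine ⟨m, Finset.mem_filter.mpr ⟨Finset.mem_univ _, ?_⟩⟩
    rw [Finset.sum_eq_zero]
    · exact hΓ
    · intro i hi
      rw [if_neg (not_lt.mpr (hm i hi))]
  obtain ⟨k, hk, hmin⟩ := Finset.exists_min_image S d hS
  have hA := (Finset.mem_filter.mp hk).2
  have hB : Γ ≤ ∑ i, (if d k ≤ d i then (1 : ℝ) else 0) := by
    rcases (Finset.univ.filter fun i => d i < d k).eq_empty_or_nonempty with h | h
    · have : ∀ i, d k ≤ d i := fun i => by
        by_contra hc
        have : i ∈ (Finset.univ.filter fun i => d i < d k) :=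
          Finset.mem_filter.mpr ⟨Finset.mem_univ _, not_le.mp hc⟩
        rw [h] at this
        simp at this
      simp only [this, if_true]
      simpa using hn.le
    · obtain ⟨m, hm, hmax⟩ := Finset.exists_max_image _ d h
      have hmk := (Finset.mem_filter.mp hm).2
      have hmS : m ∉ S := fun hc => absurd (hmin m hc) (not_le.mpr hmk)
      have h2 : Γ < ∑ i, (if d m < d i then (1 : ℝ) else 0) := by
        by_contra hc
        exact hmS (Finset.mem_filter.mpr ⟨Finset.mem_univ _, not_lt.mp hc⟩)
      refine h2.le.trans (Finset.sum_le_sum fun i _ => ?_)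
      by_cases h3 : d k ≤ d i
      · rw [if_pos h3]; split_ifs <;> norm_num
      · have := hmax i (Finset.mem_filter.mpr ⟨Finset.mem_univ _, not_le.mp h3⟩)
        rw [if_neg h3, if_neg (not_lt.mpr this)]
  have hseg : Γ ∈ segment ℝ (∑ i, (if d k < d i then (1 : ℝ) else 0))
      (∑ i, (if d k ≤ d i then (1 : ℝ) else 0)) := by
    rw [segment_eq_Icc (hA.trans hB)]
    exact ⟨hA, hB⟩
  obtain ⟨a, b, ha, hb, hab, hG⟩ := hseg
  refine ⟨fun i => a * (if d k < d i then (1 : ℝ) else 0) + b * (if d k ≤ d i then (1 : ℝ) else 0),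
    d k, fun j => ?_, hd k, Or.inl ?_, fun j h => ?_, fun j h => ?_⟩
  · dsimp only
    constructor <;> split_ifs <;> linarith
  · rw [Finset.sum_add_distrib, ← Finset.mul_sum, ← Finset.mul_sum]
    simpa only [smul_eq_mul] using hG
  · simp only [if_pos h, if_pos h.le]; linarith
  · simp only [if_neg (not_lt.mpr h.le), if_neg (not_le.mpr h)]; ring

/-- Strong LP duality for the Bertsimas–Sim inner problem: for `d : Fin n → ℝ`
nonnegative and budget `Γ ≥ 0`, the primal value
`sup { ∑ j, u j * d j : 0 ≤ u ≤ 1, ∑ j, u j ≤ Γ }` equals the dual value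
`inf { ∑ j, ζ j + Γ * η : ζ ≥ 0, η ≥ 0, ζ j + η ≥ d j for all j }`. -/
theorem bertsimas_sim_strong_duality
    (n : ℕ) (d : Fin n → ℝ) (hd : ∀ j, 0 ≤ d j) (Γ : ℝ) (hΓ : 0 ≤ Γ) :
    sSup {s : ℝ | ∃ u : Fin n → ℝ,
        (∀ j, 0 ≤ u j ∧ u j ≤ 1) ∧ (∑ j, u j ≤ Γ) ∧ s = ∑ j, u j * d j} =
    sInf {s : ℝ | ∃ (ζ : Fin n → ℝ) (η : ℝ),
        (∀ j, 0 ≤ ζ j) ∧ 0 ≤ η ∧ (∀ j, d j ≤ ζ j + η) ∧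
        s = ∑ j, ζ j + Γ * η} := by
  obtain ⟨u, η, hu, hη, hs, h1, h0⟩ := bs_exists n d hd Γ hΓ
  have hsum : ∑ j, u j ≤ Γ ∧ η * (∑ j, u j) = Γ * η := by
    rcases hs with h | ⟨h, h'⟩
    · exact ⟨h.le, by rw [h]; ring⟩
    · exact ⟨h', by rw [h]; ring⟩
  have key : ∑ j, u j * d j = ∑ j, max (d j - η) 0 + Γ * η := by
    rw [← hsum.2, Finset.mul_sum, ← Finset.sum_add_distrib]
    refine Finset.sum_congr rfl fun j _ => ?_
    rcases lt_trichotomy (d j) η with h | h | h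
    · rw [h0 j h, max_eq_right (by linarith)]; ring
    · rw [h]; simp [mul_comm]
    · rw [h1 j h, max_eq_left (by linarith)]; ring
  have hP : IsGreatest {s : ℝ | ∃ u : Fin n → ℝ,
        (∀ j, 0 ≤ u j ∧ u j ≤ 1) ∧ (∑ j, u j ≤ Γ) ∧ s = ∑ j, u j * d j} (∑ j, u j * d j) := by
    refine ⟨⟨u, hu, hsum.1, rfl⟩, ?_⟩
    rintro _ ⟨v, hv, hvs, rfl⟩
    rw [key]
    exact bs_weak n d Γ v _ η hv hvs (fun j => le_max_right _ _) hη
      (fun j => by linarith [le_max_left (d j - η) 0])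
  have hD : IsLeast {s : ℝ | ∃ (ζ : Fin n → ℝ) (η : ℝ),
        (∀ j, 0 ≤ ζ j) ∧ 0 ≤ η ∧ (∀ j, d j ≤ ζ j + η) ∧
        s = ∑ j, ζ j + Γ * η} (∑ j, u j * d j) := by
    refine ⟨⟨fun j => max (d j - η) 0, η, fun j => le_max_right _ _, hη,
      fun j => by linarith [le_max_left (d j - η) 0], key⟩, ?_⟩
    rintro _ ⟨z, e, hz, he, hd', rfl⟩
    exact bs_weak n d Γ u z e hu hsum.1 hz he hd'
  rw [hP.csSup_eq, hD.csInf_eq]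
end

section
/- Let n ∈ ℕ, d : Fin n → ℝ with d_j ≥ 0 for all j, and let Γ ∈ ℕ. Then sSup { ∑_j u_j·d_j : u : Fin n → ℝ, 0 ≤ u_j ≤ 1 for all j, ∑_j u_j ≤ Γ } equals the maximum over all subsets U ⊆ Fin n with |U| ≤ Γ of ∑_{j∈U} d_j. -/
lemma exists_threshold (n : ℕ) (d : Fin n → ℝ) (hd : ∀ j, 0 ≤ d j) (Γ : ℕ) :
    ∃ (U : Finset (Fin n)) (t : ℝ), 0 ≤ t ∧ (∀ j ∈ U, t ≤ d j) ∧ (∀ j, j ∉ U → d j ≤ t) ∧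
      U.card ≤ Γ ∧ (t = 0 ∨ U.card = Γ) := by
  induction Γ with
  | zero =>
    refine ⟨∅, ∑ j, d j, Finset.sum_nonneg fun j _ => hd j, by simp, ?_, by simp, by simp⟩
    intro j _
    exact Finset.single_le_sum (fun i _ => hd i) (Finset.mem_univ j)
  | succ k ih =>
    obtain ⟨U, t, ht, h1, h2, h3, h4⟩ := ih
    rcases h4 with h4 | h4
    · exact ⟨U, t, ht, h1, h2, by omega, Or.inl h4⟩
    · rcases (Uᶜ).eq_empty_or_nonempty with he | hne
      · refine ⟨U, 0, le_rfl, fun j _ => hd j, ?_, by omega, Or.inl rfl⟩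
        intro j hj
        have : j ∈ Uᶜ := Finset.mem_compl.2 hj
        simp [he] at this
      · obtain ⟨a, ha, hmax⟩ := Finset.exists_max_image (Uᶜ) d hne
        have ha' : a ∉ U := Finset.mem_compl.1 ha
        have hc : (insert a U).card = k + 1 := by
          rw [Finset.card_insert_of_notMem ha', h4]
        refine ⟨insert a U, d a, hd a, ?_, ?_, hc.le, Or.inr hc⟩
        · intro j hj
          rcases Finset.mem_insert.1 hj with rfl | hj
          · exact le_rfl
          · exact (h2 a ha').trans (h1 j hj)
        · intro j hj
          exact hmax j (Finset.mem_compl.2 fun h => hj (Finset.mem_insert_of_mem h))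

lemma sum_le_subset (n : ℕ) (d : Fin n → ℝ) (hd : ∀ j, 0 ≤ d j) (Γ : ℕ) (u : Fin n → ℝ)
    (hu : ∀ j, 0 ≤ u j ∧ u j ≤ 1) (hs : ∑ j, u j ≤ (Γ : ℝ)) :
    ∃ U : Finset (Fin n), U.card ≤ Γ ∧ ∑ j, u j * d j ≤ ∑ j ∈ U, d j := by
  obtain ⟨U, t, ht, h1, h2, h3, h4⟩ := exists_threshold n d hd Γ
  refine ⟨U, h3, ?_⟩
  have key : ∑ j, u j * d j ≤ ∑ j, ((if j ∈ U then d j - t else 0) + t * u j) := by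
    apply Finset.sum_le_sum
    intro j _
    obtain ⟨a, b⟩ := hu j
    split_ifs with hj
    · nlinarith [h1 j hj]
    · nlinarith [h2 j hj]
  rw [Finset.sum_add_distrib, ← Finset.mul_sum, Finset.sum_ite_mem, Finset.univ_inter,
    Finset.sum_sub_distrib, Finset.sum_const, nsmul_eq_mul] at key
  rcases h4 with h4 | h4
  · subst h4; linarith
  · rw [h4] at key; nlinarith

/-- For nonnegative deviations `d : Fin n → ℝ` and an integer budget `Γ`, the
continuous worst case over the budget polytope `{u ∈ [0,1]^n : ∑ j, u j ≤ Γ}`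
coincides with the combinatorial worst case over subsets `U` of cardinality at
most `Γ`. -/
theorem budget_polytope_sup_eq_subset_max
    (n : ℕ) (d : Fin n → ℝ) (hd : ∀ j, 0 ≤ d j) (Γ : ℕ) :
    sSup {s : ℝ | ∃ u : Fin n → ℝ,
        (∀ j, 0 ≤ u j ∧ u j ≤ 1) ∧ (∑ j, u j ≤ (Γ : ℝ)) ∧ s = ∑ j, u j * d j} =
    (Finset.univ.filter (fun U : Finset (Fin n) => U.card ≤ Γ)).sup'
      ⟨∅, by simp⟩ (fun U => ∑ j ∈ U, d j) := by
  apply IsLUB.csSup_eq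
  · constructor
    · rintro s ⟨u, hu, hs, rfl⟩
      obtain ⟨U, hU, hle⟩ := sum_le_subset n d hd Γ u hu hs
      exact hle.trans (Finset.le_sup' (fun U : Finset (Fin n) => ∑ j ∈ U, d j) (by simpa using hU))
    · intro b hb
      apply Finset.sup'_le
      intro U hU
      have hU' : U.card ≤ Γ := by simpa using hU
      apply hb
      refine ⟨fun j => if j ∈ U then 1 else 0, ?_, ?_, ?_⟩
      · intro j; dsimp only; split_ifs <;> norm_num
      · simpa using hU'
      · simp
  · exact ⟨_, fun _ => 0, by simp, by simp, rfl⟩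
end
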